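/- arXiv:1510.08740 — 2 statements merged into one kernel-verified Lean document; each statement's English description precedes it below -/
import Mathlib

section
/- Let H be a real Hilbert space, Ψ : H → ℝ ∪ {+∞} proper, lower-semicontinuous and convex, and Φ : H → ℝ convex and continuously differentiable with L-Lipschitz continuous gradient. Suppose x* ∈ argmin(Ψ + Φ), and let (x_k) be generated by the accelerated forward-backward algorithm with parameter α > 3 and step size 0 < s < 1/L. Define δ_k = (k−1)(‖x_k − x*‖² − ‖x_{k−1} − x*‖²) + (α−1)‖x_k − x*‖². Then for every k ≥ 1, δ_{k+1} − δ_k ≤ 2(k+α−1)‖x_k − x_{k−1}‖², and the limit lim_{k→∞} δ_k exists. -/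
open Filter RealInnerProductSpace


lemma line_hasDerivAt {H : Type*} [NormedAddCommGroup H] [InnerProductSpace ℝ H] [CompleteSpace H]
    (Φ : H → ℝ) (Φ' : H → H) (hΦ_diff : ∀ u, HasGradientAt Φ (Φ' u) u) (u d : H) (t : ℝ) :
    HasDerivAt (fun t : ℝ => Φ (u + t • d)) (inner ℝ (Φ' (u + t • d)) d) t := by
  have h1 : HasDerivAt (fun t : ℝ => u + t • d) d t := by
    simpa using ((hasDerivAt_id t).smul_const d).const_add u
  have h2 := (hasGradientAt_iff_hasFDerivAt.1 (hΦ_diff (u + t • d)))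
  have h3 := h2.comp_hasDerivAt t h1
  rw [InnerProductSpace.toDual_apply_apply] at h3
  exact h3

lemma descent_ineq {H : Type*} [NormedAddCommGroup H] [InnerProductSpace ℝ H] [CompleteSpace H]
    (Φ : H → ℝ) (Φ' : H → H) (L : ℝ) (hL : 0 < L) (hΦ_diff : ∀ u, HasGradientAt Φ (Φ' u) u)
    (hΦ_lip : LipschitzWith (Real.toNNReal L) Φ') (u d : H) :
    Φ (u + d) ≤ Φ u + inner ℝ (Φ' u) d + L / 2 * ‖d‖ ^ 2 := by
  have key := image_le_of_deriv_right_le_deriv_boundary (a := 0) (b := 1)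
    (f := fun t : ℝ => Φ (u + t • d)) (f' := fun t => inner ℝ (Φ' (u + t • d)) d)
    (B := fun t : ℝ => Φ u + t * inner ℝ (Φ' u) d + L / 2 * ‖d‖ ^ 2 * t ^ 2)
    (B' := fun t : ℝ => inner ℝ (Φ' u) d + L * ‖d‖ ^ 2 * t)
    (fun t _ => (line_hasDerivAt Φ Φ' hΦ_diff u d t).continuousAt.continuousWithinAt)
    (fun t _ => (line_hasDerivAt Φ Φ' hΦ_diff u d t).hasDerivWithinAt)
    (by simp) (by fun_prop)
    (fun t _ => by
      have h : HasDerivAt (fun t : ℝ => Φ u + t * inner ℝ (Φ' u) d + L / 2 * ‖d‖ ^ 2 * t ^ 2)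
          (inner ℝ (Φ' u) d + L * ‖d‖ ^ 2 * t) t := by
        have h := (((hasDerivAt_id t).mul_const (inner ℝ (Φ' u) d)).const_add (Φ u)).add
          ((hasDerivAt_pow 2 t).const_mul (L / 2 * ‖d‖ ^ 2))
        refine h.congr_deriv ?_
        simp
        ring
      exact h.hasDerivWithinAt)
    (fun t ht => by
      have h1 : inner ℝ (Φ' (u + t • d) - Φ' u) d ≤ ‖Φ' (u + t • d) - Φ' u‖ * ‖d‖ :=
        real_inner_le_norm _ _
      have h2 := hΦ_lip.dist_le_mul (u + t • d) u
      rw [dist_eq_norm, dist_eq_norm, Real.coe_toNNReal _ hL.le, add_sub_cancel_left, norm_smul,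
        Real.norm_of_nonneg ht.1] at h2
      rw [inner_sub_left] at h1
      have h3 := mul_le_mul_of_nonneg_right h2 (norm_nonneg d)
      show inner ℝ (Φ' (u + t • d)) d ≤ inner ℝ (Φ' u) d + L * ‖d‖ ^ 2 * t
      nlinarith)
  have := key (x := 1) (by simp)
  simpa using this

lemma convex_grad_ineq {H : Type*} [NormedAddCommGroup H] [InnerProductSpace ℝ H] [CompleteSpace H]
    (Φ : H → ℝ) (Φ' : H → H) (hΦ_convex : ConvexOn ℝ Set.univ Φ)
    (hΦ_diff : ∀ u, HasGradientAt Φ (Φ' u) u) (u d : H) :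
    Φ u + inner ℝ (Φ' u) d ≤ Φ (u + d) := by
  have hc : ConvexOn ℝ Set.univ (fun t : ℝ => Φ (u + t • d)) := by
    refine ⟨convex_univ, ?_⟩
    intro a _ b _ p q hp hq hpq
    have h := hΦ_convex.2 (Set.mem_univ (u + a • d)) (Set.mem_univ (u + b • d)) hp hq hpq
    have e : u + (p • a + q • b) • d = p • (u + a • d) + q • (u + b • d) := by
      have : u = (p + q) • u := by rw [hpq, one_smul]
      conv_lhs => rw [this]
      simp only [smul_eq_mul]
      module
    show Φ (u + (p • a + q • b) • d) ≤ _
    rw [e]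
    exact h
  have h := hc.le_slope_of_hasDerivAt (Set.mem_univ 0) (Set.mem_univ 1) one_pos
    (line_hasDerivAt Φ Φ' hΦ_diff u d 0)
  simp [slope] at h
  linarith

/-- Prox optimality, in real form. -/
lemma prox_ineq {H : Type*} [NormedAddCommGroup H] [InnerProductSpace ℝ H]
    (Ψ : H → EReal) (s : ℝ) (hs : 0 < s)
    (hΨ_convex : ∀ u v : H, ∀ a b : ℝ, 0 ≤ a → 0 ≤ b → a + b = 1 →
      Ψ (a • u + b • v) ≤ (a : EReal) * Ψ u + (b : EReal) * Ψ v)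
    (p g z : H) (P Z : ℝ) (hP : Ψ p = P) (hZ : Ψ z = Z)
    (hx : ∀ u : H,
      Ψ p + ((1 / (2 * s) * ‖p - g‖ ^ 2 : ℝ) : EReal)
        ≤ Ψ u + ((1 / (2 * s) * ‖u - g‖ ^ 2 : ℝ) : EReal)) :
    s * (P - Z) ≤ inner ℝ (p - g) (z - p) := by
  have key : ∀ t : ℝ, 0 < t → t ≤ 1 →
      s * (P - Z) ≤ inner ℝ (p - g) (z - p) + t * (‖z - p‖ ^ 2 / 2) := by
    intro t ht ht1
    have h1 := hx ((1 - t) • p + t • z)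
    have h2 := hΨ_convex p z (1 - t) t (by linarith) ht.le (by ring)
    rw [hP, hZ] at h2
    rw [hP] at h1
    have h3 := h1.trans (add_le_add_left h2 _)
    have h4 : P + 1 / (2 * s) * ‖p - g‖ ^ 2 ≤
        ((1 - t) * P + t * Z) + 1 / (2 * s) * ‖(1 - t) • p + t • z - g‖ ^ 2 := by
      exact_mod_cast h3
    have e : (1 - t) • p + t • z - g = (p - g) + t • (z - p) := by module
    rw [e, norm_add_sq_real, norm_smul, inner_smul_right, Real.norm_of_nonneg ht.le] at h4
    have h5 : 1 / (2 * s) * (2 * s) = 1 := by field_simp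
    have h6 := mul_le_mul_of_nonneg_right h4 (by positivity : 0 ≤ 2 * s)
    have h7 : 2 * t * (s * (P - Z)) ≤
        2 * t * (inner ℝ (p - g) (z - p) + t * (‖z - p‖ ^ 2 / 2)) := by
      generalize 1 / (2 * s) = r at *
      generalize ‖p - g‖ ^ 2 = N at *
      generalize inner ℝ (p - g) (z - p) = I at *
      generalize ‖z - p‖ = M at *
      have e1 : (P + r * N) * (2 * s) = 2 * s * P + (r * (2 * s)) * N := by ring
      have e2 : ((1 - t) * P + t * Z + r * (N + 2 * (t * I) + (t * M) ^ 2)) * (2 * s)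
        = 2 * s * ((1 - t) * P + t * Z) + (r * (2 * s)) * (N + 2 * (t * I) + (t * M) ^ 2) := by
        ring
      rw [e1, e2, h5] at h6
      linarith
    exact le_of_mul_le_mul_left h7 (by positivity)
  have hlim : Tendsto (fun t : ℝ => inner ℝ (p - g) (z - p) + t * (‖z - p‖ ^ 2 / 2))
      (nhdsWithin 0 (Set.Ioi 0)) (nhds (inner ℝ (p - g) (z - p))) := by
    have : Continuous (fun t : ℝ => inner ℝ (p - g) (z - p) + t * (‖z - p‖ ^ 2 / 2)) := by
      fun_prop
    have h := this.tendsto 0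
    simp only [zero_mul, add_zero] at h
    exact h.mono_left nhdsWithin_le_nhds
  refine ge_of_tendsto hlim ?_
  filter_upwards [Ioc_mem_nhdsGT (show (0 : ℝ) < 1 by norm_num)] with t ht
  exact key t ht.1 ht.2

lemma fb_ineq {H : Type*} [NormedAddCommGroup H] [InnerProductSpace ℝ H] [CompleteSpace H]
    (Ψ : H → EReal) (Φ : H → ℝ) (Φ' : H → H) (L s : ℝ)
    (hΨ_convex : ∀ u v : H, ∀ a b : ℝ, 0 ≤ a → 0 ≤ b → a + b = 1 →
      Ψ (a • u + b • v) ≤ (a : EReal) * Ψ u + (b : EReal) * Ψ v)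
    (hΦ_convex : ConvexOn ℝ Set.univ Φ)
    (hΦ_diff : ∀ u, HasGradientAt Φ (Φ' u) u)
    (hΦ_lip : LipschitzWith (Real.toNNReal L) Φ')
    (hs : 0 < s) (hL : 0 < L) (hsL : s * L ≤ 1)
    (p y z : H) (P Z : ℝ) (hP : Ψ p = P) (hZ : Ψ z = Z)
    (hx : ∀ u : H,
      Ψ p + ((1 / (2 * s) * ‖p - (y - s • Φ' y)‖ ^ 2 : ℝ) : EReal)
        ≤ Ψ u + ((1 / (2 * s) * ‖u - (y - s • Φ' y)‖ ^ 2 : ℝ) : EReal)) :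
    2 * s * ((P + Φ p) - (Z + Φ z)) ≤ ‖y - z‖ ^ 2 - ‖p - z‖ ^ 2 := by
  have h1 := prox_ineq Ψ s hs hΨ_convex p _ z P Z hP hZ hx
  have h2 := descent_ineq Φ Φ' L hL hΦ_diff hΦ_lip y (p - y)
  have h3 := convex_grad_ineq Φ Φ' hΦ_convex hΦ_diff y (z - y)
  rw [add_sub_cancel] at h2 h3
  obtain ⟨a, rfl⟩ : ∃ a, p = y + a := ⟨p - y, by simp⟩
  obtain ⟨b, rfl⟩ : ∃ b, z = y + b := ⟨z - y, by simp⟩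
  have e1 : y + a - (y - s • Φ' y) = a + s • Φ' y := by abel
  have e2 : y + b - (y + a) = b - a := by abel
  have e3 : y - (y + b) = -b := by abel
  have e4 : y + a - (y + b) = a - b := by abel
  rw [e1, e2, inner_add_left, inner_sub_right, inner_smul_left, inner_sub_right,
    real_inner_self_eq_norm_sq] at h1
  rw [e3, e4, norm_neg, norm_sub_sq_real]
  simp only [add_sub_cancel_left] at h2 h3
  simp only [conj_trivial] at h1
  have h4 : s * L * ‖a‖ ^ 2 ≤ 1 * ‖a‖ ^ 2 := mul_le_mul_of_nonneg_right hsL (sq_nonneg _)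
  have h5 := mul_le_mul_of_nonneg_left h2 hs.le
  have h6 := mul_le_mul_of_nonneg_left h3 hs.le
  nlinarith

lemma scalar_step (α s κ β w w' A B C ab ac K : ℝ) (hα : 3 < α) (hs : 0 < s) (hκ : 2 ≤ κ)
    (hβ : β * (κ + α - 1) = κ - 1) (hw : 0 ≤ w) (hB : 0 ≤ B)
    (hK : K = 2 / (α - 3) + 2 * α)
    (I1 : 2 * s * (w' - w) ≤ β ^ 2 * B - C)
    (I2 : 2 * s * w' ≤ 2 * β * ab + β ^ 2 * B - 2 * ac - C) :
    ((κ + α - 1) ^ 2 * C + 2 * s * (κ + α - 1) ^ 2 * w'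
        + K * (2 * s * (κ + α - 1) ^ 2 * w'
          + ((α - 1) ^ 2 * A + 2 * (α - 1) * (κ + α - 1) * ac + (κ + α - 1) ^ 2 * C)))
      + (α - 1) * (2 * κ + α - 3) * B
    ≤ ((κ + α - 2) ^ 2 * B + 2 * s * (κ + α - 2) ^ 2 * w
        + K * (2 * s * (κ + α - 2) ^ 2 * w
          + ((α - 1) ^ 2 * A + 2 * (α - 1) * (κ - 1) * ab + (κ - 1) ^ 2 * B))) := by
  have hK0 : 0 ≤ K := by
    rw [hK]
    have : 0 < α - 3 := by linarith
    positivity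
  have hK1 : 2 * κ + 2 * α - 3 ≤ K * ((α - 3) * κ + (α - 2) ^ 2) := by
    have h3 : 0 < α - 3 := by linarith
    have : 2 / (α - 3) * (α - 3) = 2 := by field_simp
    have h4 : 0 ≤ 2 / (α - 3) := by positivity
    have e : K * ((α - 3) * κ + (α - 2) ^ 2) = (2 / (α - 3) * (α - 3)) * κ
      + 2 / (α - 3) * (α - 2) ^ 2 + 2 * α * ((α - 3) * κ) + 2 * α * (α - 2) ^ 2 := by
      rw [hK]; ring
    rw [e, this]
    have a1 : 0 ≤ 2 / (α - 3) * (α - 2) ^ 2 := by positivity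
    have a2 : 0 ≤ 2 * α * ((α - 3) * κ) := by positivity
    have a3 : 2 * α * 1 ≤ 2 * α * (α - 2) ^ 2 := by
      apply mul_le_mul_of_nonneg_left _ (by linarith)
      nlinarith
    linarith
  have ht : 0 < κ + α - 1 := by linarith
  obtain ⟨t, rfl⟩ : ∃ t, κ = t - α + 1 := ⟨κ + α - 1, by ring⟩
  have et : t - α + 1 + α - 1 = t := by ring
  rw [et] at hβ ht ⊢
  have hb2 : β ^ 2 * t ^ 2 = (t - α) ^ 2 := by
    rw [← mul_pow, hβ]; ring
  have J1 := mul_le_mul_of_nonneg_left I1 (sq_nonneg t)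
  have J1' : 2 * s * t ^ 2 * (w' - w) ≤ (t - α) ^ 2 * B - t ^ 2 * C := by
    rw [← hb2]; linarith
  have hk : 0 ≤ t - α + 1 := by linarith
  have M1 := mul_le_mul_of_nonneg_left I1 (mul_nonneg hk ht.le)
  have M2 := mul_le_mul_of_nonneg_left I2 (mul_nonneg (by linarith : 0 ≤ α - 1) ht.le)
  have M : 2 * s * t ^ 2 * w' + (2 * (α - 1) * t * ac + t ^ 2 * C) ≤
      2 * s * t * (t - α + 1) * w + 2 * (α - 1) * (t - α) * ab + (t - α) ^ 2 * B := by
    have e1 : (α - 1) * t * (2 * β * ab) = 2 * (α - 1) * (t - α) * ab := by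
      have : (α - 1) * t * (2 * β * ab) = 2 * (α - 1) * (β * t) * ab := by ring
      rw [this, hβ]; ring
    have e2 : (t - α) ^ 2 * B = (t - α + 1) * t * (β ^ 2 * B) + (α - 1) * t * (β ^ 2 * B) := by
      rw [← hb2]; ring
    rw [← e1, e2]
    linarith
  have hKM := mul_le_mul_of_nonneg_left M hK0
  have hsw : 0 ≤ 2 * s * w := by positivity
  have hKw := mul_le_mul_of_nonneg_left hK1 hsw
  nlinarith

lemma tendsto_of_antitone_nonneg (f : ℕ → ℝ) (hf : ∀ n, f (n + 1) ≤ f n) (h0 : ∀ n, 0 ≤ f n) :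
    ∃ l, Tendsto f atTop (nhds l) :=
  ⟨_, tendsto_atTop_ciInf (antitone_nat_of_succ_le hf) ⟨0, by rintro _ ⟨n, rfl⟩; exact h0 n⟩⟩

/-- `δ_{k+1} - δ_k ≤ 2(k+α-1)‖x_k-x_{k-1}‖²` and `lim δ_k` exists. -/
theorem fista_delta_inequality_and_limit
    {H : Type*} [NormedAddCommGroup H] [InnerProductSpace ℝ H] [CompleteSpace H]
    (Ψ : H → EReal) (Φ : H → ℝ) (Φ' : H → H) (L s α : ℝ)
    (hΨ_ne_bot : ∀ u, Ψ u ≠ ⊥) (hΨ_proper : ∃ u, Ψ u ≠ ⊤)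
    (hΨ_lsc : LowerSemicontinuous Ψ)
    (hΨ_convex : ∀ u v : H, ∀ a b : ℝ, 0 ≤ a → 0 ≤ b → a + b = 1 →
      Ψ (a • u + b • v) ≤ (a : EReal) * Ψ u + (b : EReal) * Ψ v)
    (hΦ_convex : ConvexOn ℝ Set.univ Φ)
    (hΦ_diff : ∀ u, HasGradientAt Φ (Φ' u) u)
    (hΦ_lip : LipschitzWith (Real.toNNReal L) Φ')
    (hα : 3 < α) (hs : 0 < s) (hsL : s < 1 / L)
    (x y : ℕ → H)
    (hy : ∀ k : ℕ, 1 ≤ k →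
      y k = x k + (((k : ℝ) - 1) / ((k : ℝ) + α - 1)) • (x k - x (k - 1)))
    (hx : ∀ k : ℕ, 1 ≤ k → ∀ u : H,
      Ψ (x (k + 1)) + ((1 / (2 * s) * ‖x (k + 1) - (y k - s • Φ' (y k))‖ ^ 2 : ℝ) : EReal)
        ≤ Ψ u + ((1 / (2 * s) * ‖u - (y k - s • Φ' (y k))‖ ^ 2 : ℝ) : EReal))
    (xstar : H)
    (hxstar : ∀ u, Ψ xstar + (Φ xstar : EReal) ≤ Ψ u + (Φ u : EReal)) :
    (∀ k : ℕ, 1 ≤ k →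
        ((((k + 1) : ℝ) - 1) * (‖x (k + 1) - xstar‖ ^ 2 - ‖x ((k + 1) - 1) - xstar‖ ^ 2) + (α - 1) * ‖x (k + 1) - xstar‖ ^ 2) - (((k : ℝ) - 1) * (‖x k - xstar‖ ^ 2 - ‖x (k - 1) - xstar‖ ^ 2) + (α - 1) * ‖x k - xstar‖ ^ 2) ≤ 2 * ((k : ℝ) + α - 1) * ‖x k - x (k - 1)‖ ^ 2) ∧
      ∃ l : ℝ, Tendsto (fun k : ℕ => (((k : ℝ) - 1) * (‖x k - xstar‖ ^ 2 - ‖x (k - 1) - xstar‖ ^ 2) + (α - 1) * ‖x k - xstar‖ ^ 2)) atTop (nhds l) := by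
  have hL : 0 < L := by
    by_contra h
    have : 1 / L ≤ 0 := one_div_nonpos.2 (not_lt.1 h)
    linarith
  have hsL' : s * L ≤ 1 := by
    have := (lt_div_iff₀ hL).1 hsL
    linarith
  obtain ⟨u0, hu0⟩ := hΨ_proper
  have hfinx : ∀ k : ℕ, 1 ≤ k → Ψ (x (k + 1)) ≠ ⊤ := by
    intro k hk h
    have h1 := hx k hk u0
    rw [h, EReal.top_add_coe, top_le_iff] at h1
    exact (EReal.add_ne_top hu0 (EReal.coe_ne_top _)) h1
  have hfins : Ψ xstar ≠ ⊤ := by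
    intro h
    have h1 := hxstar u0
    rw [h, EReal.top_add_coe, top_le_iff] at h1
    exact (EReal.add_ne_top hu0 (EReal.coe_ne_top _)) h1
  have hreal : ∀ u, Ψ u ≠ ⊤ → Ψ u = ((Ψ u).toReal : EReal) :=
    fun u hu => (EReal.coe_toReal hu (hΨ_ne_bot u)).symm
  obtain ⟨w, hw⟩ : ∃ w : H → ℝ, ∀ u, w u = ((Ψ u).toReal + Φ u) - ((Ψ xstar).toReal + Φ xstar) :=
    ⟨_, fun _ => rfl⟩
  have hws : w xstar = 0 := by rw [hw]; ring
  have hw0 : ∀ u, Ψ u ≠ ⊤ → 0 ≤ w u := by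
    intro u hu
    have h := hxstar u
    rw [hreal u hu, hreal _ hfins] at h
    have h' : (Ψ xstar).toReal + Φ xstar ≤ (Ψ u).toReal + Φ u := by exact_mod_cast h
    rw [hw]; linarith
  have step : ∀ k : ℕ, 1 ≤ k → ∀ z, Ψ z ≠ ⊤ →
      2 * s * (w (x (k + 1)) - w z) ≤ ‖y k - z‖ ^ 2 - ‖x (k + 1) - z‖ ^ 2 := by
    intro k hk z hz
    have h := fb_ineq Ψ Φ Φ' L s hΨ_convex hΦ_convex hΦ_diff hΦ_lip hs hL hsL' _ _ z _ _
      (hreal _ (hfinx k hk)) (hreal z hz) (hx k hk)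
    rw [hw, hw]; linarith
  -- first claim
  have claim1 : ∀ k : ℕ, 1 ≤ k →
        ((((k + 1) : ℝ) - 1) * (‖x (k + 1) - xstar‖ ^ 2 - ‖x ((k + 1) - 1) - xstar‖ ^ 2) + (α - 1) * ‖x (k + 1) - xstar‖ ^ 2) - (((k : ℝ) - 1) * (‖x k - xstar‖ ^ 2 - ‖x (k - 1) - xstar‖ ^ 2) + (α - 1) * ‖x k - xstar‖ ^ 2) ≤ 2 * ((k : ℝ) + α - 1) * ‖x k - x (k - 1)‖ ^ 2 := by
    intro k hk
    rw [Nat.add_sub_cancel]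
    have hk1 : (1 : ℝ) ≤ k := by exact_mod_cast hk
    have ht : 0 < (k : ℝ) + α - 1 := by linarith
    have h1 := step k hk xstar hfins
    have h2 := hw0 _ (hfinx k hk)
    rw [hws, hy k hk] at h1
    obtain ⟨β, hβ⟩ : ∃ β, β = ((k : ℝ) - 1) / ((k : ℝ) + α - 1) := ⟨_, rfl⟩
    have hβt : β * ((k : ℝ) + α - 1) = k - 1 := by rw [hβ]; field_simp
    have hβ0 : 0 ≤ β := by rw [hβ]; exact div_nonneg (by linarith) ht.le
    have hβ1 : β ≤ 1 := by rw [hβ, div_le_one ht]; linarith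
    rw [← hβ] at h1
    have e1 : x k + β • (x k - x (k - 1)) - xstar = (x k - xstar) + β • (x k - x (k - 1)) := by
      abel
    have e2 : x (k - 1) - xstar = (x k - xstar) - (x k - x (k - 1)) := by abel
    rw [e1, norm_add_sq_real, inner_smul_right, norm_smul, Real.norm_of_nonneg hβ0] at h1
    rw [e2, norm_sub_sq_real (x k - xstar) (x k - x (k - 1))]
    generalize inner ℝ (x k - xstar) (x k - x (k - 1)) = ab at *
    generalize ‖x (k + 1) - xstar‖ ^ 2 = A' at *
    generalize ‖x k - xstar‖ ^ 2 = A at *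
    have hB : 0 ≤ ‖x k - x (k - 1)‖ ^ 2 := sq_nonneg _
    rw [mul_pow] at h1
    generalize ‖x k - x (k - 1)‖ ^ 2 = B at *
    have h3 : 0 ≤ 2 * s * (w (x (k + 1)) - 0) := by
      rw [sub_zero]; positivity
    have h4 : A' - A ≤ 2 * (β * ab) + β ^ 2 * B := by linarith
    have h5 := mul_le_mul_of_nonneg_left h4 ht.le
    have h6 : (β ^ 2 + β) * B ≤ 2 * B := by
      apply mul_le_mul_of_nonneg_right _ hB
      nlinarith
    have h7 := mul_le_mul_of_nonneg_left h6 ht.le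
    have e3 : ((k : ℝ) + α - 1) * (2 * (β * ab) + β ^ 2 * B)
      = (β * ((k : ℝ) + α - 1)) * (2 * ab) + ((k : ℝ) + α - 1) * ((β ^ 2 + β) * B)
        - (β * ((k : ℝ) + α - 1)) * B := by ring
    rw [e3, hβt] at h5
    linarith
  refine ⟨claim1, ?_⟩
  obtain ⟨K, hK⟩ : ∃ K : ℝ, K = 2 / (α - 3) + 2 * α := ⟨_, rfl⟩
  have hK0 : 1 ≤ K := by
    have : 0 < α - 3 := by linarith
    have : 0 ≤ 2 / (α - 3) := by positivity
    rw [hK]; linarith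
  obtain ⟨δ, hδ⟩ : ∃ δ : ℕ → ℝ, δ = (fun k : ℕ => (((k : ℝ) - 1) * (‖x k - xstar‖ ^ 2 - ‖x (k - 1) - xstar‖ ^ 2) + (α - 1) * ‖x k - xstar‖ ^ 2)) := ⟨_, rfl⟩
  rw [← hδ]
  obtain ⟨G, hG⟩ : ∃ G : ℕ → ℝ, ∀ k, G k = ((k : ℝ) + α - 2) ^ 2 * ‖x k - x (k - 1)‖ ^ 2
      + 2 * s * ((k : ℝ) + α - 2) ^ 2 * w (x k)
        + K * (2 * s * ((k : ℝ) + α - 2) ^ 2 * w (x k)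
          + ‖(α - 1) • (x k - xstar) + ((k : ℝ) - 1) • (x k - x (k - 1))‖ ^ 2) := ⟨_, fun _ => rfl⟩
  have hwk : ∀ k, 2 ≤ k → 0 ≤ w (x k) := by
    intro k hk
    obtain ⟨j, rfl⟩ : ∃ j, k = j + 1 := ⟨k - 1, by omega⟩
    exact hw0 _ (hfinx j (by omega))
  have hfk : ∀ k, 2 ≤ k → Ψ (x k) ≠ ⊤ := by
    intro k hk
    obtain ⟨j, rfl⟩ : ∃ j, k = j + 1 := ⟨k - 1, by omega⟩
    exact hfinx j (by omega)
  have hexp : ∀ (p q : ℝ) (a b : H), ‖p • a + q • b‖ ^ 2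
      = p ^ 2 * ‖a‖ ^ 2 + 2 * p * q * inner ℝ a b + q ^ 2 * ‖b‖ ^ 2 := by
    intro p q a b
    rw [norm_add_sq_real, norm_smul, norm_smul, inner_smul_left, inner_smul_right, mul_pow,
      mul_pow, Real.norm_eq_abs, Real.norm_eq_abs, sq_abs, sq_abs]
    simp only [conj_trivial]
    ring
  have hG0 : ∀ k : ℕ, 2 ≤ k → ((k : ℝ) + α - 2) ^ 2 * ‖x k - x (k - 1)‖ ^ 2 ≤ G k := by
    intro k hk
    have := hwk k hk
    rw [hG]
    have : 0 ≤ 2 * s * ((k : ℝ) + α - 2) ^ 2 * w (x k) := by positivity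
    have : 0 ≤ K * (2 * s * ((k : ℝ) + α - 2) ^ 2 * w (x k)
          + ‖(α - 1) • (x k - xstar) + ((k : ℝ) - 1) • (x k - x (k - 1))‖ ^ 2) := by positivity
    linarith
  have hGstep : ∀ k : ℕ, 2 ≤ k →
      G (k + 1) + (α - 1) * (2 * (k : ℝ) + α - 3) * ‖x k - x (k - 1)‖ ^ 2 ≤ G k := by
    intro k hk
    have hk2 : (2 : ℝ) ≤ k := by exact_mod_cast hk
    have ht : 0 < (k : ℝ) + α - 1 := by linarith
    have h1 := step k (by omega) xstar hfins
    have h2 := step k (by omega) (x k) (hfk k hk)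
    rw [hws, hy k (by omega)] at h1
    rw [hy k (by omega)] at h2
    obtain ⟨β, hβ⟩ : ∃ β, β = ((k : ℝ) - 1) / ((k : ℝ) + α - 1) := ⟨_, rfl⟩
    have hβt : β * ((k : ℝ) + α - 1) = k - 1 := by rw [hβ]; field_simp
    rw [← hβ] at h1 h2
    rw [hG, hG, Nat.add_sub_cancel]
    have e1 : x k + β • (x k - x (k - 1)) - xstar
        = (1 : ℝ) • (x k - xstar) + β • (x k - x (k - 1)) := by
      rw [one_smul]; abel
    have e2 : x k + β • (x k - x (k - 1)) - x k = β • (x k - x (k - 1)) := by abel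
    have e3 : x (k + 1) - xstar = (1 : ℝ) • (x k - xstar) + (1 : ℝ) • (x (k + 1) - x k) := by
      rw [one_smul, one_smul]; abel
    have e4 : (α - 1) • (x (k + 1) - xstar) + (((k + 1 : ℕ) : ℝ) - 1) • (x (k + 1) - x k)
        = (α - 1) • (x k - xstar) + ((k : ℝ) + α - 1) • (x (k + 1) - x k) := by
      push_cast; module
    have e5 : ((k + 1 : ℕ) : ℝ) + α - 2 = (k : ℝ) + α - 1 := by push_cast; ring
    rw [e1, e3, hexp, hexp] at h1
    rw [e2, norm_smul, mul_pow, Real.norm_eq_abs, sq_abs] at h2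
    rw [e4, e5, hexp, hexp]
    exact scalar_step α s k β _ _ _ _ _ _ _ K hα hs hk2 hβt (hwk k hk) (sq_nonneg _) hK h2
      (by linarith)
  have hδstep : ∀ k : ℕ, 2 ≤ k → δ (k + 1) + G (k + 1) ≤ δ k + G k := by
    intro k hk
    have hk2 : (2 : ℝ) ≤ k := by exact_mod_cast hk
    have h1 := claim1 k (by omega)
    have h2 := hGstep k hk
    have h3 : 2 * ((k : ℝ) + α - 1) * ‖x k - x (k - 1)‖ ^ 2
        ≤ (α - 1) * (2 * (k : ℝ) + α - 3) * ‖x k - x (k - 1)‖ ^ 2 := by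
      apply mul_le_mul_of_nonneg_right _ (sq_nonneg _)
      nlinarith
    rw [hδ]
    simp only [Nat.cast_add, Nat.cast_one]
    linarith
  have hδ0 : ∀ k : ℕ, 2 ≤ k → 0 ≤ δ k + G k := by
    intro k hk
    have hk2 : (2 : ℝ) ≤ k := by exact_mod_cast hk
    have h1 := hG0 k hk
    have h2 : 0 ≤ ‖(α - 1) • (x k - xstar) + ((k : ℝ) - 1) • (x k - x (k - 1))‖ ^ 2 :=
      sq_nonneg _
    have e2 : x (k - 1) - xstar = (x k - xstar) - (x k - x (k - 1)) := by abel
    rw [hexp] at h2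
    rw [hδ]
    simp only []
    rw [e2, norm_sub_sq_real (x k - xstar) (x k - x (k - 1))]
    have hB : 0 ≤ ‖x k - x (k - 1)‖ ^ 2 := sq_nonneg _
    generalize inner ℝ (x k - xstar) (x k - x (k - 1)) = ab at *
    generalize ‖x k - xstar‖ ^ 2 = A at *
    generalize ‖x k - x (k - 1)‖ ^ 2 = B at *
    have hGn : 0 ≤ G k := le_trans (by positivity) h1
    have h3 : ((k : ℝ) - 1) * ((k : ℝ) + α - 2) * B ≤ ((k : ℝ) + α - 2) ^ 2 * B := by
      apply mul_le_mul_of_nonneg_right _ hB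
      nlinarith
    have h4 : 1 * G k ≤ (α - 1) * G k := mul_le_mul_of_nonneg_right (by linarith) hGn
    have h5 : 0 ≤ (α - 1) * (((k : ℝ) - 1) * (A - (A - 2 * ab + B)) + (α - 1) * A + G k) := by
      linarith
    exact nonneg_of_mul_nonneg_right h5 (by linarith)
  obtain ⟨l1, hl1⟩ := tendsto_of_antitone_nonneg (fun n => δ (n + 2) + G (n + 2))
    (fun n => hδstep (n + 2) (by omega)) (fun n => hδ0 (n + 2) (by omega))
  obtain ⟨l2, hl2⟩ := tendsto_of_antitone_nonneg (fun n => G (n + 2))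
    (fun n => by
      have h := hGstep (n + 2) (by omega)
      have : 0 ≤ (α - 1) * (2 * ((n + 2 : ℕ) : ℝ) + α - 3) * ‖x (n + 2) - x (n + 2 - 1)‖ ^ 2 := by
        apply mul_nonneg _ (sq_nonneg _)
        apply mul_nonneg (by linarith)
        have : (0 : ℝ) ≤ ((n + 2 : ℕ) : ℝ) := Nat.cast_nonneg _
        linarith
      show G (n + 2 + 1) ≤ G (n + 2)
      linarith)
    (fun n => le_trans (by positivity) (hG0 (n + 2) (by omega)))
  refine ⟨l1 - l2, (tendsto_add_atTop_iff_nat 2).1 ?_⟩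
  have := hl1.sub hl2
  simpa using this
end

section
/- Let H be a real Hilbert space, Ψ : H → ℝ ∪ {+∞} proper, lower-semicontinuous and convex, and Φ : H → ℝ convex and continuously differentiable with L-Lipschitz continuous gradient. Suppose S = argmin(Ψ + Φ) is nonempty. Let (g_k) be a sequence in H with Σ_{k=1}^∞ k‖g_k‖ < +∞, and let (x_k) be generated by the inexact accelerated forward-backward algorithm y_k = x_k + ((k−1)/(k+α−1))(x_k − x_{k−1}), x_{k+1} = prox_{sΨ}(y_k − s(∇Φ(y_k) − g_k)), with α > 3 and 0 < s < 1/L. Then lim_{k→∞} k² ((Ψ + Φ)(x_k) − min(Ψ + Φ)) = 0, lim_{k→∞} k ‖x_{k+1} − x_k‖ = 0, and the sequence (x_k) converges weakly to a point of S. -/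
open Filter RealInnerProductSpace

lemma fista_robbins (e b f : ℕ → ℝ) (he : ∀ n, 0 ≤ e n) (hb : ∀ n, 0 ≤ b n) (hf : ∀ n, 0 ≤ f n)
    (hfs : Summable f) (h : ∀ n, e (n+1) + b n ≤ e n + f n) :
    Summable b ∧ ∃ l, Tendsto e atTop (nhds l) := by
  have hF : ∀ n, ∑ i ∈ Finset.range n, f i ≤ ∑' i, f i := fun n => hfs.sum_le_tsum _ (fun i _ => hf i)
  constructor
  · have h1 : ∀ n, e n + ∑ i ∈ Finset.range n, b i ≤ e 0 + ∑ i ∈ Finset.range n, f i := by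
      intro n
      induction n with
      | zero => simp
      | succ k ih => rw [Finset.sum_range_succ, Finset.sum_range_succ]; linarith [h k]
    refine summable_of_sum_range_le (c := e 0 + ∑' i, f i) hb (fun n => ?_)
    linarith [h1 n, he n, hF n]
  · have hanti : Antitone (fun n => e n - ∑ i ∈ Finset.range n, f i) := by
      refine antitone_nat_of_succ_le (fun n => ?_)
      rw [Finset.sum_range_succ]; linarith [h n, hb n]
    have hbd : BddBelow (Set.range (fun n => e n - ∑ i ∈ Finset.range n, f i)) := by
      refine ⟨- ∑' i, f i, ?_⟩
      rintro _ ⟨n, rfl⟩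
      simp only
      linarith [he n, hF n]
    have h2 := tendsto_atTop_ciInf hanti hbd
    refine ⟨_, (h2.add hfs.hasSum.tendsto_sum_nat).congr (fun n => ?_)⟩
    ring

lemma fista_gronwall (E b : ℕ → ℝ) (hE : ∀ n, 0 ≤ E n) (hb : ∀ n, 0 ≤ b n) (hbs : Summable b)
    (h : ∀ n, E (n+1) ≤ E n + b n * √(E (n+1))) : ∃ M, 0 ≤ M ∧ ∀ n, √(E n) ≤ M := by
  have hF : ∀ n, ∑ i ∈ Finset.range n, b i ≤ ∑' i, b i := fun n => hbs.sum_le_tsum _ (fun i _ => hb i)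
  have step : ∀ n, √(E (n+1)) ≤ √(E n) + b n := by
    intro n
    have h1 := Real.sq_sqrt (hE n)
    have h2 := Real.sq_sqrt (hE (n+1))
    have h3 := Real.sqrt_nonneg (E n)
    have h4 := Real.sqrt_nonneg (E (n+1))
    by_contra! hc
    nlinarith [h n, hb n]
  have h1 : ∀ n, √(E n) ≤ √(E 0) + ∑ i ∈ Finset.range n, b i := by
    intro n
    induction n with
    | zero => simp
    | succ k ih => rw [Finset.sum_range_succ]; linarith [step k]
  exact ⟨√(E 0) + ∑' i, b i, add_nonneg (Real.sqrt_nonneg _) (tsum_nonneg hb),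
    fun n => (h1 n).trans (by linarith [hF n])⟩

lemma fista_step {H : Type*} [NormedAddCommGroup H] [InnerProductSpace ℝ H]
    (X X1 V V1 Y G u : H) (q a s t t1 : ℝ) (ha : 2 < a) (hq : 2 ≤ q) (hs : 0 < s)
    (hV : V1 = X1 - X) (hY : Y = X + ((q-1)/(q+a)) • V)
    (key1 : t1 - t ≤ 1/s * ⟪Y - X1, Y - X⟫ - 1/(2*s) * ‖Y - X1‖^2 + ⟪G, X1 - X⟫)
    (key2 : t1 ≤ 1/s * ⟪Y - X1, Y - u⟫ - 1/(2*s) * ‖Y - X1‖^2 + ⟪G, X1 - u⟫) :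
    ((q+a)^2 * t1 + a^2/(2*s) * ‖X1 + (q/a) • V1 - u‖^2) + (q*(a-2)+(a-1)^2)*t ≤
    ((q+a-1)^2 * t + a^2/(2*s) * ‖X + ((q-1)/a) • V - u‖^2)
      + a*(q+a)*⟪G, X1 + (q/a) • V1 - u⟫ := by
  have k3 : (q+a) * (q * (t1 - t) + a * t1) ≤ (q+a) * (q * (1/s * ⟪Y - X1, Y - X⟫ - 1/(2*s) * ‖Y - X1‖^2 + ⟪G, X1 - X⟫)
     + a * (1/s * ⟪Y - X1, Y - u⟫ - 1/(2*s) * ‖Y - X1‖^2 + ⟪G, X1 - u⟫)) := by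
    gcongr
  have hqa : q + a ≠ 0 := by positivity
  have ha0 : a ≠ 0 := by positivity
  obtain ⟨A, hA⟩ : ∃ A, A = X - u := ⟨_, rfl⟩
  have e1 : Y - X1 = ((q-1)/(q+a)) • V - V1 := by rw [hY, hV]; abel
  have e2 : Y - X = ((q-1)/(q+a)) • V := by rw [hY]; abel
  have e3 : Y - u = A + ((q-1)/(q+a)) • V := by rw [hY, hA]; abel
  have e4 : X1 - u = A + V1 := by rw [hV, hA]; abel
  have e5 : X1 + (q/a) • V1 - u = A + V1 + (q/a) • V1 := by rw [← e4]; abel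
  have e6 : X + ((q-1)/a) • V - u = A + ((q-1)/a) • V := by rw [hA]; abel
  have e7 : X1 - X = V1 := hV.symm
  rw [e1, e2, e3, e4, e7] at k3
  rw [e5, e6]
  clear key1 key2 e1 e2 e3 e4 e5 e6 e7
  simp only [← real_inner_self_eq_norm_sq, inner_add_left, inner_add_right, inner_sub_left, inner_sub_right,
    real_inner_smul_left, real_inner_smul_right, real_inner_comm A V, real_inner_comm A V1,
    real_inner_comm V V1] at k3 ⊢
  generalize ⟪A, A⟫ = c1 at *
  generalize ⟪A, V⟫ = c2 at *
  generalize ⟪A, V1⟫ = c3 at *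
  generalize ⟪V, V⟫ = c4 at *
  generalize ⟪V, V1⟫ = c5 at *
  generalize ⟪V1, V1⟫ = c6 at *
  generalize ⟪G, V1⟫ = c7 at *
  generalize ⟪G, A⟫ = c8 at *
  rw [← sub_nonneg] at k3 ⊢
  refine le_of_le_of_eq k3 ?_
  field_simp
  ring

lemma fista_step2 {H : Type*} [NormedAddCommGroup H] [InnerProductSpace ℝ H]
    (X X1 V V1 Y G : H) (q a s t t1 : ℝ) (ha : 2 < a) (hq : 2 ≤ q) (hs : 0 < s)
    (hV : V1 = X1 - X) (hY : Y = X + ((q-1)/(q+a)) • V)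
    (key1 : t1 - t ≤ 1/s * ⟪Y - X1, Y - X⟫ - 1/(2*s) * ‖Y - X1‖^2 + ⟪G, X1 - X⟫) :
    ((q+a)^2 * t1 + (q+a)^2/(2*s) * ‖V1‖^2) + (2*a*(q-1)+a^2) / (2*s) * ‖V‖^2 ≤
    ((q+a-1)^2 * t + (q+a-1)^2/(2*s) * ‖V‖^2)
      + ((2*(q+a)-1) * t + (q+a)^2*⟪G, V1⟫) := by
  have k3 := mul_le_mul_of_nonneg_left key1 (sq_nonneg (q+a))
  have hqa : q + a ≠ 0 := by positivity
  have e1 : Y - X1 = ((q-1)/(q+a)) • V - V1 := by rw [hY, hV]; abel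
  have e2 : Y - X = ((q-1)/(q+a)) • V := by rw [hY]; abel
  have e7 : X1 - X = V1 := hV.symm
  rw [e1, e2, e7] at k3
  clear key1 e1 e2 e7
  simp only [← real_inner_self_eq_norm_sq, inner_sub_left, inner_sub_right,
    real_inner_smul_left, real_inner_smul_right, real_inner_comm V V1] at k3 ⊢
  generalize ⟪V, V⟫ = c4 at *
  generalize ⟪V, V1⟫ = c5 at *
  generalize ⟪V1, V1⟫ = c6 at *
  generalize ⟪G, V1⟫ = c7 at *
  rw [← sub_nonneg] at k3 ⊢
  refine le_of_le_of_eq k3 ?_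
  field_simp
  ring

lemma fista_descent {H : Type*} [NormedAddCommGroup H] [InnerProductSpace ℝ H] [CompleteSpace H]
    (Φ : H → ℝ) (Φ' : H → H) (L : ℝ) (hL : 0 < L)
    (hΦ_diff : ∀ u, HasGradientAt Φ (Φ' u) u)
    (hΦ_lip : LipschitzWith (Real.toNNReal L) Φ') (u v : H) :
    Φ v ≤ Φ u + ⟪Φ' u, v - u⟫ + L/2 * ‖v - u‖^2 := by
  have hd : ∀ t : ℝ, HasDerivAt (fun t : ℝ => Φ (u + t • (v - u)) - t * ⟪Φ' u, v - u⟫ - L/2 * t^2 * ‖v-u‖^2)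
      (⟪Φ' (u + t • (v-u)), v - u⟫ - ⟪Φ' u, v - u⟫ - L * t * ‖v-u‖^2) t := by
    intro t
    have h1 : HasDerivAt (fun t : ℝ => u + t • (v - u)) (v - u) t := by
      simpa using ((hasDerivAt_id t).smul_const (v-u)).const_add u
    have h2 := (hΦ_diff (u + t • (v-u))).hasFDerivAt.comp_hasDerivAt t h1
    have h3 := (h2.sub ((hasDerivAt_id t).mul_const ⟪Φ' u, v - u⟫)).sub
      ((((hasDerivAt_id t).pow 2).const_mul (L/2)).mul_const (‖v-u‖^2))
    refine h3.congr_deriv ?_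
    simp only [InnerProductSpace.toDual_apply_apply, id]
    push_cast
    rw [pow_one]
    ring
  have hanti : AntitoneOn (fun t : ℝ => Φ (u + t • (v - u)) - t * ⟪Φ' u, v - u⟫ - L/2 * t^2 * ‖v-u‖^2) (Set.Icc 0 1) := by
    refine antitoneOn_of_deriv_nonpos (convex_Icc 0 1) (fun t _ => (hd t).continuousAt.continuousWithinAt)
      (fun t _ => (hd t).differentiableAt.differentiableWithinAt) (fun t ht => ?_)
    rw [(hd t).deriv, ← inner_sub_left]
    rw [interior_Icc] at ht
    have h1 := real_inner_le_norm (Φ' (u + t • (v-u)) - Φ' u) (v - u)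
    have h2 : ‖Φ' (u + t • (v-u)) - Φ' u‖ ≤ L * (t * ‖v-u‖) := by
      have := hΦ_lip.dist_le_mul (u + t • (v-u)) u
      rw [dist_eq_norm, dist_eq_norm, Real.coe_toNNReal _ hL.le, add_sub_cancel_left, norm_smul, Real.norm_eq_abs, abs_of_pos ht.1] at this
      exact this
    have h3 := mul_le_mul_of_nonneg_right h2 (norm_nonneg (v-u))
    nlinarith
  have := hanti (Set.left_mem_Icc.2 zero_le_one) (Set.right_mem_Icc.2 zero_le_one) zero_le_one
  simp at this
  linarith

lemma fista_grad {H : Type*} [NormedAddCommGroup H] [InnerProductSpace ℝ H] [CompleteSpace H]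
    (Φ : H → ℝ) (Φ' : H → H) (hΦ_convex : ConvexOn ℝ Set.univ Φ)
    (hΦ_diff : ∀ u, HasGradientAt Φ (Φ' u) u) (u v : H) :
    Φ u + ⟪Φ' u, v - u⟫ ≤ Φ v := by
  have h1 : HasDerivAt (fun t : ℝ => u + t • (v - u)) (v - u) 0 := by
    simpa using ((hasDerivAt_id (0:ℝ)).smul_const (v-u)).const_add u
  have h0 : HasFDerivAt Φ (InnerProductSpace.toDual ℝ H (Φ' u)) (u + (0:ℝ) • (v-u)) := by
    simpa using (hΦ_diff u).hasFDerivAt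
  have h2 := h0.comp_hasDerivAt (0:ℝ) h1
  have hc : ConvexOn ℝ Set.univ (Φ ∘ fun t : ℝ => u + t • (v - u)) := by
    have := hΦ_convex.comp_affineMap (AffineMap.lineMap u v : ℝ →ᵃ[ℝ] H)
    have e : (fun t : ℝ => u + t • (v - u)) = (AffineMap.lineMap u v : ℝ →ᵃ[ℝ] H) := by
      ext t; simp [AffineMap.lineMap_apply, add_comm]
    rw [e]
    exact this
  have h3 := hc.le_slope_of_hasDerivAt (Set.mem_univ 0) (Set.mem_univ 1) zero_lt_one h2
  simp [slope_def_field, InnerProductSpace.toDual_apply_apply] at h3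
  linarith

lemma fista_prox {H : Type*} [NormedAddCommGroup H] [InnerProductSpace ℝ H]
    (Ψ : H → EReal) (s : ℝ) (hs : 0 < s)
    (hΨ_convex : ∀ u v : H, ∀ a b : ℝ, 0 ≤ a → 0 ≤ b → a + b = 1 →
      Ψ (a • u + b • v) ≤ (a : EReal) * Ψ u + (b : EReal) * Ψ v)
    (p w u : H) (r r' : ℝ) (hp : Ψ p = r) (hu : Ψ u = r')
    (hx : ∀ u, Ψ p + ((1 / (2 * s) * ‖p - w‖ ^ 2 : ℝ) : EReal) ≤ Ψ u + ((1 / (2 * s) * ‖u - w‖ ^ 2 : ℝ) : EReal)) :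
    r + 1/s * ⟪w - p, u - p⟫ ≤ r' := by
  have h1 : ∀ t : ℝ, 0 < t → t < 1 → 0 ≤ (r' - r + 1/s * ⟪p - w, u - p⟫) + t * (1/(2*s) * ‖u - p‖^2) := by
    intro t ht ht1
    have h2 := hΨ_convex p u (1-t) t (by linarith) ht.le (by ring)
    have h3 := hx ((1-t) • p + t • u)
    rw [hp, hu, ← EReal.coe_mul, ← EReal.coe_mul, ← EReal.coe_add] at h2
    have h4 := h3.trans (add_le_add_left h2 _)
    rw [hp, ← EReal.coe_add, ← EReal.coe_add, EReal.coe_le_coe_iff] at h4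
    have e : (1-t) • p + t • u - w = (p - w) + t • (u - p) := by module
    rw [e, norm_add_sq_real, norm_smul, real_inner_smul_right, mul_pow, Real.norm_eq_abs, sq_abs] at h4
    have h5 : 0 ≤ t * ((r' - r + 1/s * ⟪p - w, u - p⟫) + t * (1/(2*s) * ‖u - p‖^2)) := by
      rw [← sub_nonneg] at h4
      convert h4 using 1
      field_simp
      ring
    exact nonneg_of_mul_nonneg_right h5 ht
  have h2 : Tendsto (fun t : ℝ => (r' - r + 1/s * ⟪p - w, u - p⟫) + t * (1/(2*s) * ‖u - p‖^2)) (nhdsWithin 0 (Set.Ioi 0))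
      (nhds ((r' - r + 1/s * ⟪p - w, u - p⟫) + 0 * (1/(2*s) * ‖u - p‖^2))) := by
    refine Tendsto.mono_left (Continuous.tendsto ?_ 0) nhdsWithin_le_nhds
    fun_prop
  have h3 := ge_of_tendsto h2 (b := 0) (by
    filter_upwards [Ioo_mem_nhdsGT (zero_lt_one (α := ℝ))] with t ht
    exact h1 t ht.1 ht.2)
  have e : ⟪w - p, u - p⟫ = - ⟪p - w, u - p⟫ := by rw [← inner_neg_left, neg_sub]
  rw [e]; linarith

lemma fista_energy {H : Type*} [NormedAddCommGroup H] [InnerProductSpace ℝ H]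
    (X V Y G : ℕ → H) (θ : ℕ → ℝ) (a s : ℝ) (ha : 2 < a) (hs : 0 < s) (u : H)
    (hV : ∀ n, V (n+1) = X (n+1) - X n)
    (hY : ∀ n : ℕ, Y n = X n + (((n:ℝ)+2-1)/((n:ℝ)+2+a)) • V n)
    (hθ : ∀ n, 0 ≤ θ n)
    (key1 : ∀ n, θ (n+1) - θ n ≤ 1/s * ⟪Y n - X (n+1), Y n - X n⟫ - 1/(2*s) * ‖Y n - X (n+1)‖^2
      + ⟪G n, X (n+1) - X n⟫)
    (key2 : ∀ n, θ (n+1) ≤ 1/s * ⟪Y n - X (n+1), Y n - u⟫ - 1/(2*s) * ‖Y n - X (n+1)‖^2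
      + ⟪G n, X (n+1) - u⟫)
    (hG : Summable fun n : ℕ => ((n:ℝ)+2+a) * ‖G n‖) :
    (∃ M, 0 ≤ M ∧ ∀ n : ℕ, ‖X n + (((n:ℝ)+2-1)/a) • V n - u‖ ≤ M) ∧
    (Summable fun n : ℕ => ((n:ℝ)+2) * θ n) ∧
    ∃ l, Tendsto (fun n : ℕ => ((n:ℝ)+2+a-1)^2 * θ n + a^2/(2*s) * ‖X n + (((n:ℝ)+2-1)/a) • V n - u‖^2)
      atTop (nhds l) := by
  obtain ⟨w, hw⟩ : ∃ w : ℕ → ℝ, ∀ n, w n = ‖X n + (((n:ℝ)+2-1)/a) • V n - u‖ := ⟨_, fun _ => rfl⟩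
  obtain ⟨E, hE⟩ : ∃ E : ℕ → ℝ, ∀ n, E n = ((n:ℝ)+2+a-1)^2 * θ n + a^2/(2*s) * w n^2 :=
    ⟨_, fun _ => rfl⟩
  have hw0 : ∀ n, 0 ≤ w n := fun n => by rw [hw]; positivity
  have hE0 : ∀ n, 0 ≤ E n := fun n => by
    rw [hE]; have := hθ n; positivity
  have hstep : ∀ n : ℕ, E (n+1) + (((n:ℝ)+2)*(a-2)+(a-1)^2) * θ n ≤ E n + a * (((n:ℝ)+2+a) * ‖G n‖) * w (n+1) := by
    intro n
    have h1 := fista_step (X n) (X (n+1)) (V n) (V (n+1)) (Y n) (G n) u ((n:ℝ)+2) a s (θ n) (θ (n+1)) ha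
      (by have : (0:ℝ) ≤ n := n.cast_nonneg
          linarith) hs (hV n) (hY n) (key1 n) (key2 n)
    have e1 : w (n+1) = ‖X (n+1) + (((n:ℝ)+2)/a) • V (n+1) - u‖ := by
      rw [hw]; push_cast; congr 5; ring
    have h2 := real_inner_le_norm (G n) (X (n+1) + (((n:ℝ)+2)/a) • V (n+1) - u)
    rw [← e1] at h1 h2
    rw [← hw n] at h1
    have h3 : 0 ≤ a * ((n:ℝ)+2+a) := by positivity
    have h4 := mul_le_mul_of_nonneg_left h2 h3
    rw [hE, hE]
    push_cast
    have e2 : (n:ℝ)+1+2+a-1 = n+2+a := by ring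
    rw [e2]
    nlinarith
  obtain ⟨c, hc⟩ : ∃ c, c = a^2/(2*s) := ⟨_, rfl⟩
  have hc0 : 0 < c := by rw [hc]; positivity
  have hsc : 0 < √c := Real.sqrt_pos.2 hc0
  have hwE : ∀ n, w n ≤ √(E n) / √c := by
    intro n
    rw [le_div_iff₀ hsc]
    refine Real.le_sqrt_of_sq_le ?_
    rw [mul_pow, Real.sq_sqrt hc0.le, hE, ← hc]
    have := hθ n
    have : 0 ≤ ((n:ℝ)+2+a-1)^2 * θ n := by positivity
    linarith
  have hB : ∀ n : ℕ, 0 ≤ (((n:ℝ)+2)*(a-2)+(a-1)^2) * θ n := by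
    intro n
    have := hθ n
    have : 0 < a - 2 := by linarith
    positivity
  have hg0 : ∀ n : ℕ, 0 ≤ a * (((n:ℝ)+2+a) * ‖G n‖) := fun n => by positivity
  obtain ⟨M, hM0, hM⟩ := fista_gronwall E (fun n => a * (((n:ℝ)+2+a) * ‖G n‖) / √c) hE0
    (fun n => div_nonneg (hg0 n) hsc.le) ((hG.mul_left a).div_const _) (by
      intro n
      have h1 := mul_le_mul_of_nonneg_left (hwE (n+1)) (hg0 n)
      have h2 := hstep n
      have h3 := hB n
      have e : a * (((n:ℝ)+2+a) * ‖G n‖) / √c * √(E (n+1)) = a * (((n:ℝ)+2+a) * ‖G n‖) * (√(E (n+1)) / √c) := by ring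
      rw [e]
      linarith)
  have hwM : ∀ n, w n ≤ M / √c := fun n => (hwE n).trans (by gcongr; exact hM n)
  obtain ⟨h1, l, hl⟩ := fista_robbins E (fun n => (((n:ℝ)+2)*(a-2)+(a-1)^2) * θ n)
    (fun n => a * (((n:ℝ)+2+a) * ‖G n‖) * (M / √c)) hE0 hB
    (fun n => mul_nonneg (hg0 n) (by positivity)) ((hG.mul_left a).mul_right _) (by
      intro n
      have h2 := mul_le_mul_of_nonneg_left (hwM (n+1)) (hg0 n)
      have h3 := hstep n
      linarith)
  refine ⟨⟨M / √c, by positivity, fun n => by rw [← hw]; exact hwM n⟩, ?_, l, hl.congr (fun n => by rw [hE, hw])⟩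
  refine Summable.of_nonneg_of_le (fun n => ?_) (fun n => ?_) (h1.mul_left (1/(a-2)))
  · have := hθ n; positivity
  · have h2 := hθ n
    have h3 : 0 < a - 2 := by linarith
    have h4 : 0 ≤ (a-1)^2 * θ n := by positivity
    rw [div_mul_eq_mul_div, le_div_iff₀ h3]
    nlinarith

lemma fista_core {H : Type*} [NormedAddCommGroup H] [InnerProductSpace ℝ H]
    (X V Y G : ℕ → H) (θ : ℕ → ℝ) (a s : ℝ) (ha : 2 < a) (hs : 0 < s) (S : Set H) (hS : S.Nonempty)
    (hV : ∀ n, V (n+1) = X (n+1) - X n)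
    (hY : ∀ n : ℕ, Y n = X n + (((n:ℝ)+2-1)/((n:ℝ)+2+a)) • V n)
    (hθ : ∀ n, 0 ≤ θ n)
    (key1 : ∀ n, θ (n+1) - θ n ≤ 1/s * ⟪Y n - X (n+1), Y n - X n⟫ - 1/(2*s) * ‖Y n - X (n+1)‖^2
      + ⟪G n, X (n+1) - X n⟫)
    (key2 : ∀ u ∈ S, ∀ n, θ (n+1) ≤ 1/s * ⟪Y n - X (n+1), Y n - u⟫ - 1/(2*s) * ‖Y n - X (n+1)‖^2
      + ⟪G n, X (n+1) - u⟫)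
    (hG : Summable fun n : ℕ => ((n:ℝ)+2) * ‖G n‖) :
    Tendsto (fun n : ℕ => ((n:ℝ)+2)^2 * θ n) atTop (nhds 0) ∧
    Tendsto (fun n : ℕ => ((n:ℝ)+2) * ‖V n‖) atTop (nhds 0) ∧
    ∀ u ∈ S, ∃ l, Tendsto (fun n => ‖X n - u‖) atTop (nhds l) := by
  have ha0 : 0 < a := by linarith
  have hG' : Summable fun n : ℕ => ((n:ℝ)+2+a) * ‖G n‖ := by
    refine Summable.of_nonneg_of_le (fun n => by positivity) (fun n => ?_) (hG.mul_left (1+a))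
    rw [← mul_assoc]
    have : (0:ℝ) ≤ n := n.cast_nonneg
    gcongr
    nlinarith
  have hen := fun u (hu : u ∈ S) => fista_energy X V Y G θ a s ha hs u hV hY hθ key1 (key2 u hu) hG'
  obtain ⟨u, hu⟩ := hS
  obtain ⟨⟨M, hM0, hM⟩, hsum, -⟩ := hen u hu
  -- boundedness
  have hXb : ∀ n, ‖X n - u‖ ≤ max M ‖X 0 - u‖ := by
    intro n
    induction n with
    | zero => exact le_max_right _ _
    | succ n ih =>
      have h1 := (hM (n+1)).trans (le_max_left M ‖X 0 - u‖)
      push_cast at h1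
      have hq : (0:ℝ) < (n:ℝ)+2+a := by positivity
      have e : X (n+1) - u = (a/((n:ℝ)+2+a)) • (X (n+1) + (((n:ℝ)+1+2-1)/a) • V (n+1) - u)
          + (((n:ℝ)+2)/((n:ℝ)+2+a)) • (X n - u) := by
        rw [hV n]
        match_scalars <;> field_simp <;> ring
      rw [e]
      refine (norm_add_le _ _).trans ?_
      rw [norm_smul, norm_smul, Real.norm_of_nonneg (by positivity), Real.norm_of_nonneg (by positivity)]
      calc _ ≤ a/((n:ℝ)+2+a) * max M ‖X 0 - u‖ + ((n:ℝ)+2)/((n:ℝ)+2+a) * max M ‖X 0 - u‖ := by gcongr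
        _ = _ := by field_simp; ring
  obtain ⟨R, hR⟩ : ∃ R, R = max M ‖X 0 - u‖ := ⟨_, rfl⟩
  rw [← hR] at hXb
  have hR0 : 0 ≤ R := (norm_nonneg _).trans (hXb 0)
  have hVb : ∀ n : ℕ, ((n:ℝ)+2) * ‖V (n+1)‖ ≤ a * (M + R) := by
    intro n
    have h1 := hM (n+1)
    have h2 := hXb (n+1)
    push_cast at h1
    have e : (((n:ℝ)+2)/a) • V (n+1) = (X (n+1) + (((n:ℝ)+1+2-1)/a) • V (n+1) - u) - (X (n+1) - u) := by
      match_scalars <;> ring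
    have h3 := norm_sub_le (X (n+1) + (((n:ℝ)+1+2-1)/a) • V (n+1) - u) (X (n+1) - u)
    rw [← e, norm_smul, Real.norm_of_nonneg (by positivity), div_mul_eq_mul_div] at h3
    rw [mul_comm a, ← div_le_iff₀ ha0]
    linarith
  obtain ⟨e, he⟩ : ∃ e : ℕ → ℝ, ∀ n : ℕ, e n = ((n:ℝ)+2+a-1)^2 * θ n + ((n:ℝ)+2+a-1)^2/(2*s) * ‖V n‖^2 := ⟨_, fun _ => rfl⟩
  have he0 : ∀ n, 0 ≤ e n := fun n => by rw [he]; have := hθ n; positivity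
  have hbn : ∀ n : ℕ, 0 ≤ (2*a*((n:ℝ)+2-1)+a^2) / (2*s) * ‖V n‖^2 := by
    intro n
    have : (0:ℝ) ≤ (n:ℝ)+2-1 := by have : (0:ℝ) ≤ n := n.cast_nonneg
                                   linarith
    positivity
  have hsum2 : Summable fun n : ℕ => (2*((n:ℝ)+2+a)-1) * θ n := by
    refine Summable.of_nonneg_of_le (fun n => ?_) (fun n => ?_) (hsum.mul_left (2*(1+a)))
    · have : (0:ℝ) ≤ n := n.cast_nonneg
      exact mul_nonneg (by linarith) (hθ n)
    · have : (0:ℝ) ≤ n := n.cast_nonneg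
      rw [← mul_assoc]
      refine mul_le_mul_of_nonneg_right ?_ (hθ n)
      nlinarith
  obtain ⟨h1, l, hl⟩ := fista_robbins e (fun n => (2*a*((n:ℝ)+2-1)+a^2) / (2*s) * ‖V n‖^2)
    (fun n => (2*((n:ℝ)+2+a)-1) * θ n + ((n:ℝ)+2+a) * ‖G n‖ * ((1+a) * (a*(M+R)))) he0 hbn
    (fun n => by
      have : (0:ℝ) ≤ n := n.cast_nonneg
      have h3 : 0 ≤ (2*((n:ℝ)+2+a)-1) * θ n := mul_nonneg (by linarith) (hθ n)
      positivity)
    (hsum2.add (hG'.mul_right _)) (by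
      intro n
      have hn : (0:ℝ) ≤ n := n.cast_nonneg
      have h1 := fista_step2 (X n) (X (n+1)) (V n) (V (n+1)) (Y n) (G n) ((n:ℝ)+2) a s (θ n) (θ (n+1)) ha
        (by linarith) hs (hV n) (hY n) (key1 n)
      have h2 := real_inner_le_norm (G n) (V (n+1))
      have h3 : ((n:ℝ)+2+a)^2 * ⟪G n, V (n+1)⟫ ≤ ((n:ℝ)+2+a) * ‖G n‖ * ((1+a) * (a*(M+R))) := by
        calc _ ≤ ((n:ℝ)+2+a)^2 * (‖G n‖ * ‖V (n+1)‖) := by gcongr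
          _ = ((n:ℝ)+2+a) * ‖G n‖ * (((n:ℝ)+2+a) * ‖V (n+1)‖) := by ring
          _ ≤ ((n:ℝ)+2+a) * ‖G n‖ * (((1+a) * ((n:ℝ)+2)) * ‖V (n+1)‖) := by
            gcongr; nlinarith
          _ = ((n:ℝ)+2+a) * ‖G n‖ * ((1+a) * (((n:ℝ)+2) * ‖V (n+1)‖)) := by ring
          _ ≤ _ := by gcongr ?_ * (?_ * ?_); exact hVb n
      rw [he, he]
      push_cast
      have e2 : (n:ℝ)+1+2+a-1 = n+2+a := by ring
      rw [e2]
      linarith)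
  have hl0 : l = 0 := by
    by_contra hne
    have hlp : 0 < l := lt_of_le_of_ne (ge_of_tendsto' hl he0) (Ne.symm hne)
    have hs1 : Summable fun n : ℕ => (1+a) * (((n:ℝ)+2) * θ n) + ((2*a*((n:ℝ)+2-1)+a^2) / (2*s) * ‖V n‖^2) :=
      (hsum.mul_left _).add h1
    have hs2 : Summable fun n : ℕ => (1:ℝ) / ((n+1 : ℕ) : ℝ) := by
      refine Summable.of_norm_bounded_eventually_nat (hs1.mul_left ((1+a)/(l/2))) ?_
      filter_upwards [hl.eventually (lt_mem_nhds (half_lt_self hlp))] with n hn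
      have hn0 : (0:ℝ) ≤ n := n.cast_nonneg
      rw [Real.norm_of_nonneg (by positivity)]
      rw [he] at hn
      have hp : (0:ℝ) < (n:ℝ)+2+a-1 := by linarith
      have hθn := hθ n
      have hb1 : ((n:ℝ)+2+a-1) * θ n ≤ (1+a) * (((n:ℝ)+2) * θ n) := by
        rw [← mul_assoc]
        refine mul_le_mul_of_nonneg_right ?_ hθn
        nlinarith
      have hb2 : ((n:ℝ)+2+a-1) / (2*s) * ‖V n‖^2 ≤ (2*a*((n:ℝ)+2-1)+a^2) / (2*s) * ‖V n‖^2 := by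
        gcongr ?_ / _ * _
        nlinarith
      have hb3 : l/2 ≤ ((n:ℝ)+2+a-1) * ((1+a) * (((n:ℝ)+2) * θ n) + ((2*a*((n:ℝ)+2-1)+a^2) / (2*s) * ‖V n‖^2)) := by
        refine hn.le.trans ?_
        calc _ = ((n:ℝ)+2+a-1) * (((n:ℝ)+2+a-1) * θ n + ((n:ℝ)+2+a-1) / (2*s) * ‖V n‖^2) := by ring
          _ ≤ _ := by gcongr
      have hb4 : (n:ℝ)+2+a-1 ≤ (1+a) * (n+1) := by nlinarith
      have hb5 : 0 ≤ (1+a) * (((n:ℝ)+2) * θ n) + ((2*a*((n:ℝ)+2-1)+a^2) / (2*s) * ‖V n‖^2) :=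
        add_nonneg (by positivity) (hbn n)
      have hb6 := hb3.trans (mul_le_mul_of_nonneg_right hb4 hb5)
      push_cast
      rw [div_mul_eq_mul_div, div_le_div_iff₀ (by positivity) (by positivity)]
      linarith
    exact Real.not_summable_one_div_natCast ((summable_nat_add_iff (f := fun n : ℕ => (1:ℝ)/(n:ℝ)) 1).1 hs2)
  subst hl0
  have hF : Tendsto (fun n : ℕ => ((n:ℝ)+2+a-1)^2 * θ n) atTop (nhds 0) := by
    refine squeeze_zero (fun n => mul_nonneg (sq_nonneg _) (hθ n)) (fun n => ?_) hl
    rw [he]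
    have : 0 ≤ ((n:ℝ)+2+a-1)^2/(2*s) * ‖V n‖^2 := by positivity
    linarith
  have hVt : Tendsto (fun n : ℕ => ((n:ℝ)+2) * ‖V n‖) atTop (nhds 0) := by
    have h3 : Tendsto (fun n => √(2*s*e n)) atTop (nhds 0) := by
      have := (hl.const_mul (2*s)).sqrt
      simpa using this
    refine squeeze_zero (fun n => by positivity) (fun n => ?_) h3
    refine Real.le_sqrt_of_sq_le ?_
    rw [he]
    have hn0 : (0:ℝ) ≤ n := n.cast_nonneg
    have h4 : 0 ≤ 2*s*(((n:ℝ)+2+a-1)^2 * θ n) := by have := hθ n; positivity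
    have h5 : (((n:ℝ)+2) * ‖V n‖)^2 ≤ (((n:ℝ)+2+a-1) * ‖V n‖)^2 := by
      gcongr; linarith
    have h6 : 2*s*(((n:ℝ)+2+a-1)^2/(2*s) * ‖V n‖^2) = (((n:ℝ)+2+a-1) * ‖V n‖)^2 := by
      field_simp
    linarith
  refine ⟨?_, hVt, ?_⟩
  · refine squeeze_zero (fun n => mul_nonneg (sq_nonneg _) (hθ n)) (fun n => ?_) hF
    refine mul_le_mul_of_nonneg_right ?_ (hθ n)
    gcongr
    linarith
  · intro v hv
    obtain ⟨-, -, l, hE⟩ := hen v hv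
    have h3 := ((hE.sub hF).const_mul (2*s/a^2)).sqrt
    have h4 : Tendsto (fun n : ℕ => ‖X n + (((n:ℝ)+2-1)/a) • V n - v‖) atTop (nhds √(2*s/a^2*(l-0))) := by
      refine h3.congr (fun n => ?_)
      rw [add_sub_cancel_left, ← mul_assoc]
      rw [show 2*s/a^2 * (a^2/(2*s)) = 1 by field_simp, one_mul, Real.sqrt_sq (norm_nonneg _)]
    have h5 : Tendsto (fun n : ℕ => ‖X n - v‖ - ‖X n + (((n:ℝ)+2-1)/a) • V n - v‖) atTop (nhds 0) := by
      have h6 := hVt.const_mul (1/a)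
      rw [mul_zero] at h6
      refine squeeze_zero_norm (fun n => ?_) h6
      refine (abs_norm_sub_norm_le _ _).trans ?_
      have e1 : X n - v - (X n + (((n:ℝ)+2-1)/a) • V n - v) = - ((((n:ℝ)+2-1)/a) • V n) := by abel
      have hn0 : (0:ℝ) ≤ n := n.cast_nonneg
      have hn1 : (0:ℝ) ≤ (n:ℝ)+2-1 := by linarith
      rw [e1, norm_neg, norm_smul, Real.norm_of_nonneg (by positivity), ← mul_assoc]
      gcongr
      rw [one_div_mul_eq_div]
      gcongr
      linarith
    exact ⟨_, (h5.add h4).congr (fun n => by ring)⟩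

lemma fista_opial {H : Type*} [NormedAddCommGroup H] [InnerProductSpace ℝ H] [CompleteSpace H]
    (X : ℕ → H) (S : Set H) (hS : S.Nonempty)
    (h1 : ∀ u ∈ S, ∃ l, Tendsto (fun n => ‖X n - u‖) atTop (nhds l))
    (h2 : ∀ (U : Ultrafilter ℕ) (p : H), (U : Filter ℕ) ≤ atTop →
      (∀ v, Tendsto (fun n => ⟪X n, v⟫) U (nhds ⟪p, v⟫)) → p ∈ S) :
    ∃ p ∈ S, ∀ v, Tendsto (fun n => ⟪X n, v⟫) atTop (nhds ⟪p, v⟫) := by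
  obtain ⟨u, hu⟩ := hS
  obtain ⟨l, hl⟩ := h1 u hu
  obtain ⟨C, hC⟩ := hl.bddAbove_range
  have hX : ∀ n, ‖X n‖ ≤ C + ‖u‖ := by
    intro n
    have h3 : ‖X n - u‖ ≤ C := hC ⟨n, rfl⟩
    have h4 := norm_add_le (X n - u) u
    rw [sub_add_cancel] at h4
    linarith
  have ex : ∀ U : Ultrafilter ℕ, ∃ p : H, ∀ v, Tendsto (fun n => ⟪X n, v⟫) U (nhds ⟪p, v⟫) := by
    intro U
    have hK := WeakDual.isCompact_closedBall (𝕜 := ℝ) (E := H) 0 (C + ‖u‖)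
    let f : ℕ → WeakDual ℝ H := fun n => StrongDual.toWeakDual (InnerProductSpace.toDual ℝ H (X n))
    have hf : ((U.map f : Ultrafilter _) : Filter _) ≤ 𝓟 (WeakDual.toStrongDual ⁻¹' Metric.closedBall (0 : StrongDual ℝ H) (C + ‖u‖)) := by
      rw [le_principal_iff]
      change f ⁻¹' _ ∈ (U : Filter ℕ)
      refine Filter.univ_mem' (fun n => ?_)
      simp [f, hX n]
    obtain ⟨φ, -, hφ⟩ := hK.ultrafilter_le_nhds _ hf
    refine ⟨(InnerProductSpace.toDual ℝ H).symm (WeakDual.toStrongDual φ), fun v => ?_⟩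
    have h3 : Tendsto f U (nhds φ) := hφ
    have h4 := ((WeakDual.eval_continuous v).tendsto φ).comp h3
    simpa [f, Function.comp_def] using h4
  choose P hP using ex
  have huniq : ∀ U V : Ultrafilter ℕ, (U : Filter ℕ) ≤ atTop → (V : Filter ℕ) ≤ atTop → P U = P V := by
    intro U V hU hV
    obtain ⟨a, ha⟩ := h1 _ (h2 U _ hU (hP U))
    obtain ⟨b, hb⟩ := h1 _ (h2 V _ hV (hP V))
    have h3 : Tendsto (fun n => ⟪X n, P U - P V⟫) atTop (nhds ((b^2 - a^2 + ‖P U‖^2 - ‖P V‖^2)/2)) := by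
      refine (((((hb.pow 2).sub (ha.pow 2)).add_const (‖P U‖^2)).sub_const (‖P V‖^2)).div_const 2).congr (fun n => ?_)
      rw [norm_sub_sq_real, norm_sub_sq_real, inner_sub_right]
      ring
    have h4 := tendsto_nhds_unique (h3.mono_left hU) (hP U _)
    have h5 := tendsto_nhds_unique (h3.mono_left hV) (hP V _)
    have h6 : ⟪P U - P V, P U - P V⟫ = 0 := by
      rw [inner_sub_left, ← h4, ← h5, sub_self]
    exact sub_eq_zero.1 (inner_self_eq_zero.1 h6)
  have hU0 : (Ultrafilter.of (atTop : Filter ℕ) : Filter ℕ) ≤ atTop := Ultrafilter.of_le _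
  refine ⟨P (Ultrafilter.of atTop), h2 _ _ hU0 (hP _), fun v => ?_⟩
  rw [tendsto_iff_ultrafilter]
  intro U hU
  rw [huniq _ U hU0 hU]
  exact hP U v

/-- Theorem 3: stability of the `o(k⁻²)` rates and weak convergence under summable errors. -/
theorem inexact_fista_convergence
    {H : Type*} [NormedAddCommGroup H] [InnerProductSpace ℝ H] [CompleteSpace H]
    (Ψ : H → EReal) (Φ : H → ℝ) (Φ' : H → H) (L s α : ℝ)
    (hΨ_ne_bot : ∀ u, Ψ u ≠ ⊥) (hΨ_proper : ∃ u, Ψ u ≠ ⊤)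
    (hΨ_lsc : LowerSemicontinuous Ψ)
    (hΨ_convex : ∀ u v : H, ∀ a b : ℝ, 0 ≤ a → 0 ≤ b → a + b = 1 →
      Ψ (a • u + b • v) ≤ (a : EReal) * Ψ u + (b : EReal) * Ψ v)
    (hΦ_convex : ConvexOn ℝ Set.univ Φ)
    (hΦ_diff : ∀ u, HasGradientAt Φ (Φ' u) u)
    (hΦ_lip : LipschitzWith (Real.toNNReal L) Φ')
    (g : ℕ → H)
    (hα : 3 < α) (hs : 0 < s) (hsL : s < 1 / L)
    (x y : ℕ → H)
    (hy : ∀ k : ℕ, 1 ≤ k →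
      y k = x k + (((k : ℝ) - 1) / ((k : ℝ) + α - 1)) • (x k - x (k - 1)))
    (hx : ∀ k : ℕ, 1 ≤ k → ∀ u : H,
      Ψ (x (k + 1)) + ((1 / (2 * s) * ‖x (k + 1) - (y k - s • (Φ' (y k) - g k))‖ ^ 2 : ℝ) : EReal)
        ≤ Ψ u + ((1 / (2 * s) * ‖u - (y k - s • (Φ' (y k) - g k))‖ ^ 2 : ℝ) : EReal))
    (xstar : H)
    (hxstar : ∀ u, Ψ xstar + (Φ xstar : EReal) ≤ Ψ u + (Φ u : EReal))
    (hg : Summable fun k : ℕ => (k : ℝ) * ‖g k‖) :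
    Tendsto (fun k : ℕ => (((k : ℝ) ^ 2 : ℝ) : EReal) * ((Ψ (x k) + (Φ (x k) : EReal)) - (Ψ xstar + (Φ xstar : EReal)))) atTop (nhds 0) ∧
      Tendsto (fun k : ℕ => (k : ℝ) * ‖x (k + 1) - x k‖) atTop (nhds 0) ∧
      ∃ p : H, (∀ u, Ψ p + (Φ p : EReal) ≤ Ψ u + (Φ u : EReal)) ∧
        ∀ v : H, Tendsto (fun k : ℕ => ⟪x k, v⟫) atTop (nhds ⟪p, v⟫) := by
  have hL : 0 < L := by
    by_contra! hc
    have : 1 / L ≤ 0 := one_div_nonpos.2 hc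
    linarith
  have hsL' : L / 2 ≤ 1 / (2 * s) := by
    rw [lt_div_iff₀ hL] at hsL
    rw [div_le_div_iff₀ (by positivity) (by positivity)]
    linarith
  obtain ⟨ψ, hψdef⟩ : ∃ ψ : H → ℝ, ∀ u, ψ u = (Ψ u).toReal := ⟨_, fun _ => rfl⟩
  have hψ : ∀ u, Ψ u ≠ ⊤ → Ψ u = ((ψ u : ℝ) : EReal) := fun u hu => by
    rw [hψdef, EReal.coe_toReal hu (hΨ_ne_bot u)]
  have hfin : ∀ p, (∀ u, Ψ p + (Φ p : EReal) ≤ Ψ u + (Φ u : EReal)) → Ψ p ≠ ⊤ := by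
    intro p hp htop
    obtain ⟨u, hu⟩ := hΨ_proper
    have h1 := hp u
    rw [htop, hψ u hu, EReal.top_add_coe, ← EReal.coe_add] at h1
    exact EReal.coe_ne_top _ (top_le_iff.1 h1)
  have hst := hfin xstar hxstar
  have hxfin : ∀ k, 1 ≤ k → Ψ (x (k+1)) ≠ ⊤ := by
    intro k hk htop
    have h1 := hx k hk xstar
    rw [htop, hψ _ hst, EReal.top_add_coe, ← EReal.coe_add] at h1
    exact EReal.coe_ne_top _ (top_le_iff.1 h1)
  obtain ⟨m, hm⟩ : ∃ m, m = ψ xstar + Φ xstar := ⟨_, rfl⟩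
  have hmE : Ψ xstar + (Φ xstar : EReal) = (m : EReal) := by
    rw [hψ _ hst, hm, EReal.coe_add]
  have hmle : ∀ u, Ψ u ≠ ⊤ → m ≤ ψ u + Φ u := by
    intro u hu
    have h1 := hxstar u
    rw [hmE, hψ u hu, ← EReal.coe_add, EReal.coe_le_coe_iff] at h1
    exact h1
  have keygen : ∀ k, 1 ≤ k → ∀ u, Ψ u ≠ ⊤ →
      (ψ (x (k+1)) + Φ (x (k+1))) - (ψ u + Φ u) ≤ 1/s * ⟪y k - x (k+1), y k - u⟫
        - 1/(2*s) * ‖y k - x (k+1)‖^2 + ⟪g k, x (k+1) - u⟫ := by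
    intro k hk u hu
    have h1 := fista_prox Ψ s hs hΨ_convex (x (k+1)) (y k - s • (Φ' (y k) - g k)) u _ _
      (hψ _ (hxfin k hk)) (hψ _ hu) (hx k hk)
    have h2 := fista_descent Φ Φ' L hL hΦ_diff hΦ_lip (y k) (x (k+1))
    have h3 := fista_grad Φ Φ' hΦ_convex hΦ_diff (y k) u
    obtain ⟨P, hP⟩ : ∃ P, P = y k - x (k+1) := ⟨_, rfl⟩
    obtain ⟨Q, hQ⟩ : ∃ Q, Q = y k - u := ⟨_, rfl⟩
    have e1 : y k - s • (Φ' (y k) - g k) - x (k+1) = P - s • (Φ' (y k) - g k) := by rw [hP]; abel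
    have e2 : u - x (k+1) = P - Q := by rw [hP, hQ]; abel
    have e3 : x (k+1) - y k = - P := by rw [hP]; abel
    have e4 : u - y k = - Q := by rw [hQ]; abel
    have e5 : x (k+1) - u = Q - P := by rw [hP, hQ]; abel
    rw [e1, e2] at h1
    rw [e3, norm_neg] at h2
    rw [e4] at h3
    rw [e5, ← hP, ← hQ]
    have h4 := mul_le_mul_of_nonneg_right hsL' (sq_nonneg ‖P‖)
    simp only [inner_sub_left, inner_sub_right, real_inner_smul_left, inner_neg_right,
      real_inner_self_eq_norm_sq] at h1 h2 h3 ⊢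
    have e6 : 1 / s * (‖P‖ ^ 2 - ⟪P, Q⟫ - (s * (⟪Φ' (y k), P⟫ - ⟪g k, P⟫) - s * (⟪Φ' (y k), Q⟫ - ⟪g k, Q⟫)))
        = 2 * (1 / (2 * s) * ‖P‖^2) - 1 / s * ⟪P, Q⟫ - ⟪Φ' (y k), P⟫ + ⟪g k, P⟫ + ⟪Φ' (y k), Q⟫ - ⟪g k, Q⟫ := by
      field_simp
      ring
    have e7 : 1 / s * (‖P‖ ^ 2 - ⟪P, Q⟫ - s * (⟪Φ' (y k), P⟫ - ⟪g k, P⟫ - (⟪Φ' (y k), Q⟫ - ⟪g k, Q⟫)))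
        = 2 * (1 / (2 * s) * ‖P‖^2) - 1 / s * ⟪P, Q⟫ - ⟪Φ' (y k), P⟫ + ⟪g k, P⟫ + ⟪Φ' (y k), Q⟫ - ⟪g k, Q⟫ := by
      field_simp
      ring
    first
      | rw [e6] at h1; linarith
      | rw [e7] at h1; linarith
      | nlinarith
  obtain ⟨S, hSdef⟩ : ∃ S : Set H, S = {p | ∀ u, Ψ p + (Φ p : EReal) ≤ Ψ u + (Φ u : EReal)} := ⟨_, rfl⟩
  have hSval : ∀ p ∈ S, Ψ p ≠ ⊤ ∧ ψ p + Φ p = m := by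
    intro p hp
    rw [hSdef] at hp
    have h1 := hfin p hp
    refine ⟨h1, le_antisymm ?_ (hmle p h1)⟩
    have h2 := hp xstar
    rw [hmE, hψ p h1, ← EReal.coe_add, EReal.coe_le_coe_iff] at h2
    exact h2
  have hSne : S.Nonempty := ⟨xstar, by rw [hSdef]; exact hxstar⟩
  obtain ⟨θ, hθ⟩ : ∃ θ : ℕ → ℝ, ∀ n, θ n = ψ (x (n+2)) + Φ (x (n+2)) - m := ⟨_, fun _ => rfl⟩
  have hθ0 : ∀ n, 0 ≤ θ n := fun n => by
    rw [hθ]; linarith [hmle _ (hxfin (n+1) (by omega))]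
  have hcore := fista_core (fun n => x (n+2)) (fun n => x (n+2) - x (n+1)) (fun n => y (n+2))
    (fun n => g (n+2)) θ (α - 1) s (by linarith) hs S hSne (fun n => rfl) (fun n => by
      have h1 := hy (n+2) (by omega)
      rw [h1]
      have e : n + 2 - 1 = n + 1 := by omega
      rw [e]
      push_cast
      congr 3
      ring) hθ0 (fun n => by
      have h1 := keygen (n+2) (by omega) (x (n+2)) (hxfin (n+1) (by omega))
      rw [hθ, hθ]
      have e : n + 1 + 2 = n + 2 + 1 := by omega
      simp only [e]
      linarith) (fun u hu n => by
      obtain ⟨h2, h3⟩ := hSval u hu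
      have h1 := keygen (n+2) (by omega) u h2
      rw [hθ]
      have e : n + 1 + 2 = n + 2 + 1 := by omega
      simp only [e]
      linarith) (by
      have h1 := (summable_nat_add_iff (f := fun k : ℕ => (k : ℝ) * ‖g k‖) 2).2 hg
      refine h1.congr (fun n => ?_)
      push_cast
      rfl)
  obtain ⟨c1, c2, c3⟩ := hcore
  have hθt : Tendsto θ atTop (nhds 0) := by
    refine squeeze_zero hθ0 (fun n => ?_) c1
    have hn : (0:ℝ) ≤ n := n.cast_nonneg
    have h1 : (1:ℝ) ≤ ((n:ℝ)+2)^2 := by nlinarith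
    exact le_mul_of_one_le_left (hθ0 n) h1
  refine ⟨?_, ?_, ?_⟩
  · rw [← tendsto_add_atTop_iff_nat 2]
    have h1 := (continuous_coe_real_ereal.tendsto 0).comp c1
    rw [EReal.coe_zero] at h1
    refine h1.congr (fun n => ?_)
    rw [hmE, hψ _ (hxfin (n+1) (by omega)), ← EReal.coe_add, ← EReal.coe_sub, ← EReal.coe_mul]
    simp only [Function.comp]
    rw [hθ]
    push_cast
    rfl
  · rw [← tendsto_add_atTop_iff_nat 1]
    refine squeeze_zero (fun n => by positivity) (fun n => ?_) c2
    push_cast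
    gcongr ?_ * _
    linarith
  · obtain ⟨p, hp, hpw⟩ := fista_opial (fun n => x (n+2)) S hSne c3 (by
      intro U p hU hw
      have hle : ∀ ε : ℝ, 0 < ε → Ψ p ≤ ((m - Φ p + ε : ℝ) : EReal) := by
        intro ε hε
        by_contra hnot
        obtain ⟨C, hC⟩ : ∃ C : Set H, C = {u | Ψ u ≤ ((m - Φ p + ε : ℝ) : EReal)} := ⟨_, rfl⟩
        have hclosed : IsClosed C := by rw [hC]; exact hΨ_lsc.isClosed_preimage _
        have hconv : Convex ℝ C := by
          intro u hu v hv a b ha hb hab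
          rw [hC, Set.mem_ofPred_eq] at hu hv ⊢
          have hu' : Ψ u ≠ ⊤ := ne_top_of_le_ne_top (EReal.coe_ne_top _) hu
          have hv' : Ψ v ≠ ⊤ := ne_top_of_le_ne_top (EReal.coe_ne_top _) hv
          refine (hΨ_convex u v a b ha hb hab).trans ?_
          rw [hψ u hu', EReal.coe_le_coe_iff] at hu
          rw [hψ v hv', EReal.coe_le_coe_iff] at hv
          rw [hψ u hu', hψ v hv', ← EReal.coe_mul, ← EReal.coe_mul, ← EReal.coe_add, EReal.coe_le_coe_iff]
          have h1 := mul_le_mul_of_nonneg_left hu ha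
          have h2 := mul_le_mul_of_nonneg_left hv hb
          calc _ ≤ a * (m - Φ p + ε) + b * (m - Φ p + ε) := add_le_add h1 h2
            _ = (a + b) * (m - Φ p + ε) := by ring
            _ = _ := by rw [hab, one_mul]
        have hpC : p ∉ C := by rw [hC]; exact hnot
        obtain ⟨f, c, hf1, hf2⟩ := geometric_hahn_banach_point_closed hconv hclosed hpC
        have hev : ∀ᶠ n in (U : Filter ℕ), x (n+2) ∈ C := by
          have h1 : Tendsto (fun n => θ n + m - Φ p - (⟪x (n+2), Φ' p⟫ - ⟪p, Φ' p⟫)) U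
              (nhds (0 + m - Φ p - (⟪p, Φ' p⟫ - ⟪p, Φ' p⟫))) :=
            ((((hθt.mono_left hU).add_const m).sub_const (Φ p))).sub ((hw (Φ' p)).sub_const _)
          have h2 : 0 + m - Φ p - (⟪p, Φ' p⟫ - ⟪p, Φ' p⟫) < m - Φ p + ε := by linarith
          filter_upwards [h1.eventually (gt_mem_nhds h2)] with n hn
          rw [hC, Set.mem_ofPred_eq, hψ _ (hxfin (n+1) (by omega)), EReal.coe_le_coe_iff]
          have h3 := fista_grad Φ Φ' hΦ_convex hΦ_diff p (x (n+2))
          rw [inner_sub_right, real_inner_comm, real_inner_comm (p)] at h3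
          have h4 := hθ n
          have e : n + 1 + 1 = n + 2 := by omega
          rw [e]
          linarith
        have hft : Tendsto (fun n => f (x (n+2))) U (nhds (f p)) := by
          have h1 := hw ((InnerProductSpace.toDual ℝ H).symm f)
          simp only [real_inner_comm ((InnerProductSpace.toDual ℝ H).symm f), InnerProductSpace.toDual_symm_apply] at h1
          exact h1
        obtain ⟨n, h1, h2⟩ := (hev.and (hft.eventually (gt_mem_nhds hf1))).exists
        exact absurd (hf2 _ h1) (not_lt.2 h2.le)
      have hpt : Ψ p ≠ ⊤ := ne_top_of_le_ne_top (EReal.coe_ne_top _) (hle 1 one_pos)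
      have hpm : ψ p + Φ p ≤ m := by
        refine le_of_forall_pos_le_add (fun ε hε => ?_)
        have h1 := hle ε hε
        rw [hψ p hpt, EReal.coe_le_coe_iff] at h1
        linarith
      rw [hSdef]
      intro u
      refine le_trans ?_ (hxstar u)
      rw [hmE, hψ p hpt, ← EReal.coe_add, EReal.coe_le_coe_iff]
      exact hpm)
    rw [hSdef] at hp
    exact ⟨p, hp, fun v => (tendsto_add_atTop_iff_nat 2).1 (hpw v)⟩
end
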